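/- Every Gr-category 𝒢 is equivalent, as a monoidal category, to a Gr-category 𝒢' in which I ⊗ g = g = g ⊗ I holds as an equality of objects for every object g and the left and right unitors are identity natural transformations. -/

import Mathlib

/-!
Adjoin to `C` a new unit object, isomorphic to the old one: objects are those of `C` and a formal
unit, and each formal object evaluates to an object of `C`, the formal unit to `𝟙_ C`. Morphisms are
morphisms of `C` between evaluations, so evaluation is an equivalence. Tensoring formal objects can
then be made strictly unital by decree, while evaluation preserves the new tensor product up to
isomorphisms that are unitors of `C` whenever a factor is the formal unit. Transporting the unitors
of `C` across these isomorphisms cancels them to identities; the only overlap, both factors being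
the formal unit, is settled by `λ_ (𝟙_ C) = ρ_ (𝟙_ C)`.
-/

open CategoryTheory MonoidalCategory

universe v u v' u'

/-- A Gr-category: a monoidal category in which every morphism is invertible and
every object is invertible. -/
def IsGrCategory (C : Type u) [Category.{v} C] [MonoidalCategory C] : Prop :=
  (∀ {X Y : C} (f : X ⟶ Y), IsIso f) ∧
  (∀ X : C, ∃ Y : C, Nonempty (X ⊗ Y ≅ 𝟙_ C) ∧ Nonempty (Y ⊗ X ≅ 𝟙_ C))

/-- An equivalence of monoidal categories: monoidal functors in both directions together with
monoidal natural isomorphisms to the identity functors. -/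
structure MonoidalEquiv (C : Type u) (D : Type u') [Category.{v} C] [MonoidalCategory C]
    [Category.{v'} D] [MonoidalCategory D] where
  F : C ⥤ D
  G : D ⥤ C
  [monF : F.Monoidal]
  [monG : G.Monoidal]
  unitIso : F ⋙ G ≅ 𝟭 C
  counitIso : G ⋙ F ≅ 𝟭 D
  [unit_isMonoidal : NatTrans.IsMonoidal unitIso.hom]
  [counit_isMonoidal : NatTrans.IsMonoidal counitIso.hom]

/-- A Gr-category monoidally equivalent to `C` in which `I ⊗ g = g = g ⊗ I` holds as an
equality of objects and both unitors are identity natural transformations. -/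
structure StrictlyUnitalGrModel (C : Type u) [Category.{v} C] [MonoidalCategory C] where
  D : Type u
  [cat : Category.{v} D]
  [mon : MonoidalCategory D]
  gr : IsGrCategory D
  unit_tensor_obj_eq : ∀ X : D, 𝟙_ D ⊗ X = X
  leftUnitor_eq_id : ∀ X : D, (λ_ X).hom = eqToHom (unit_tensor_obj_eq X)
  tensor_unit_obj_eq : ∀ X : D, X ⊗ 𝟙_ D = X
  rightUnitor_eq_id : ∀ X : D, (ρ_ X).hom = eqToHom (tensor_unit_obj_eq X)
  equiv : MonoidalEquiv C D

section Equivalences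

variable {C : Type u} [Category.{v} C] [MonoidalCategory C]
  {D : Type u'} [Category.{v'} D] [MonoidalCategory D]

namespace MonoidalEquiv

/-- The inverse of a monoidal equivalence. -/
def symm (e : MonoidalEquiv C D) : MonoidalEquiv D C where
  F := e.G
  G := e.F
  monF := e.monG
  monG := e.monF
  unitIso := e.counitIso
  counitIso := e.unitIso
  unit_isMonoidal := e.counit_isMonoidal
  counit_isMonoidal := e.unit_isMonoidal

lemma isEquivalence_F (e : MonoidalEquiv C D) : e.F.IsEquivalence :=
  (CategoryTheory.Equivalence.mk e.F e.G e.unitIso.symm e.counitIso).isEquivalence_functor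

/-- The monoidal equivalence given by an equivalence of categories whose functor is monoidal; the
inverse carries the monoidal structure of a right adjoint. -/
noncomputable def ofEquivalence (e : C ≌ D) [e.functor.Monoidal] : MonoidalEquiv C D :=
  letI : e.inverse.Monoidal := e.inverseMonoidal
  haveI : e.IsMonoidal :=
    letI := e.toAdjunction.rightAdjointLaxMonoidal
    inferInstanceAs e.toAdjunction.IsMonoidal
  haveI : NatTrans.IsMonoidal e.unitIso.hom := inferInstanceAs (NatTrans.IsMonoidal e.unit)
  { F := e.functor
    G := e.inverse
    unitIso := e.unitIso.symm
    counitIso := e.counitIso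
    unit_isMonoidal := inferInstanceAs (NatTrans.IsMonoidal e.unitIso.inv)
    counit_isMonoidal := inferInstanceAs (NatTrans.IsMonoidal e.counit) }

end MonoidalEquiv

namespace IsGrCategory

lemma of_full_essSurj (hC : IsGrCategory C) (F : C ⥤ D) [F.Monoidal] [F.Full] [F.EssSurj] :
    IsGrCategory D := by
  refine ⟨fun {X Y} f => ?_, fun X => ?_⟩
  · let g := F.preimage ((F.objObjPreimageIso X).hom ≫ f ≫ (F.objObjPreimageIso Y).inv)
    have : IsIso g := hC.1 g
    simpa [g] using (inferInstance : IsIso (F.map g))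
  · let i : F.obj (F.objPreimage X) ≅ X := F.objObjPreimageIso X
    obtain ⟨Y, ⟨r⟩, ⟨l⟩⟩ := hC.2 (F.objPreimage X)
    exact ⟨F.obj Y,
      ⟨whiskerRightIso i.symm _ ≪≫ Functor.Monoidal.μIso F _ _ ≪≫ F.mapIso r ≪≫
        (Functor.Monoidal.εIso F).symm⟩,
      ⟨whiskerLeftIso _ i.symm ≪≫ Functor.Monoidal.μIso F _ _ ≪≫ F.mapIso l ≪≫
        (Functor.Monoidal.εIso F).symm⟩⟩

lemma of_monoidalEquiv (hC : IsGrCategory C) (e : MonoidalEquiv C D) : IsGrCategory D :=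
  haveI := e.monF
  haveI := e.isEquivalence_F
  hC.of_full_essSurj e.F

end IsGrCategory

end Equivalences

/-- A strictly unital monoidal category: tensoring with the unit object fixes every object on the
nose, and both unitors are identities. Since the two sides of a unitor are only propositionally
equal, its being an identity is expressed by `eqToHom`. -/
structure IsStrictlyUnital (D : Type u) [Category.{v} D] [MonoidalCategory D] : Prop where
  unit_tensor_obj_eq : ∀ X : D, 𝟙_ D ⊗ X = X
  leftUnitor_eq_id : ∀ X : D, (λ_ X).hom = eqToHom (unit_tensor_obj_eq X)
  tensor_unit_obj_eq : ∀ X : D, X ⊗ 𝟙_ D = X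
  rightUnitor_eq_id : ∀ X : D, (ρ_ X).hom = eqToHom (tensor_unit_obj_eq X)

/-- The objects of a monoidal category together with a formal unit object; this type carries the
strictly unital monoidal category equivalent to `C`. -/
inductive WithStrictUnit (C : Type u) : Type u
  | unit : WithStrictUnit C
  | of (a : C) : WithStrictUnit C

namespace WithStrictUnit

variable {C : Type u} [Category.{v} C] [MonoidalCategory C]

/-- The tensor product of formal objects, with `unit` as a strict two-sided unit. -/
def tensor : WithStrictUnit C → WithStrictUnit C → WithStrictUnit C
  | unit, Y => Y
  | of a, unit => of a
  | of a, of b => of (a ⊗ b)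

lemma tensor_unit (X : WithStrictUnit C) : tensor X unit = X := by
  cases X <;> rfl

/-- The object of `C` denoted by a formal object. -/
def eval : WithStrictUnit C → C
  | unit => 𝟙_ C
  | of a => a

/-- The comparison isomorphism through which evaluation preserves tensor products. -/
def evalTensorIso : ∀ X Y : WithStrictUnit C, eval X ⊗ eval Y ≅ eval (tensor X Y)
  | unit, Y => λ_ (eval Y)
  | of a, unit => ρ_ a
  | of _, of _ => Iso.refl _

instance : Category.{v} (WithStrictUnit C) :=
  inferInstanceAs (Category.{v} (InducedCategory C (eval (C := C))))

variable (C) in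
/-- Evaluation of formal objects, as a functor. -/
abbrev evalFunctor : WithStrictUnit C ⥤ C :=
  inducedFunctor eval

variable (C) in
/-- Morphisms of formal objects are morphisms of `C` between their evaluations. -/
def fullyFaithfulEvalFunctor : (evalFunctor C).FullyFaithful :=
  fullyFaithfulInducedFunctor eval

instance : (evalFunctor C).Full := (fullyFaithfulEvalFunctor C).full

instance : (evalFunctor C).Faithful := (fullyFaithfulEvalFunctor C).faithful

instance : (evalFunctor C).EssSurj where
  mem_essImage a := ⟨of a, ⟨Iso.refl a⟩⟩

instance : (evalFunctor C).IsEquivalence where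

lemma evalFunctor_map_eqToHom_tensor_unit (X : WithStrictUnit C) :
    (evalFunctor C).map (eqToHom (tensor_unit X)) =
      (evalTensorIso X unit).inv ≫ (ρ_ (eval X)).hom := by
  cases X with
  | unit =>
    calc 𝟙 (𝟙_ C)
      _ = (λ_ (𝟙_ C)).inv ≫ (λ_ (𝟙_ C)).hom := (Iso.inv_hom_id _).symm
      _ = (λ_ (𝟙_ C)).inv ≫ (ρ_ (𝟙_ C)).hom := by rw [unitors_equal]
  | of a => exact (ρ_ a).inv_hom_id.symm

/-- Whiskerings, tensor products of morphisms and associators are those of `C` conjugated by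
`evalTensorIso`, whereas the unitors are identities by definition. -/
instance : MonoidalCategoryStruct (WithStrictUnit C) where
  tensorObj := tensor
  tensorUnit := unit
  whiskerLeft X Y₁ Y₂ f := (fullyFaithfulEvalFunctor C).preimage
    ((evalTensorIso X Y₁).inv ≫ eval X ◁ (evalFunctor C).map f ≫ (evalTensorIso X Y₂).hom)
  whiskerRight {X₁ X₂} f Y := (fullyFaithfulEvalFunctor C).preimage
    ((evalTensorIso X₁ Y).inv ≫ (evalFunctor C).map f ▷ eval Y ≫ (evalTensorIso X₂ Y).hom)
  tensorHom {X₁ Y₁ X₂ Y₂} f g := (fullyFaithfulEvalFunctor C).preimage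
    ((evalTensorIso X₁ X₂).inv ≫ ((evalFunctor C).map f ⊗ₘ (evalFunctor C).map g) ≫
      (evalTensorIso Y₁ Y₂).hom)
  associator X Y Z := (fullyFaithfulEvalFunctor C).preimageIso
    (((evalTensorIso (tensor X Y) Z).symm ≪≫ ((evalTensorIso X Y).symm ⊗ᵢ .refl _)) ≪≫
      α_ (eval X) (eval Y) (eval Z) ≪≫
      ((.refl _ ⊗ᵢ evalTensorIso Y Z) ≪≫ evalTensorIso X (tensor Y Z)))
  leftUnitor X := Iso.refl X
  rightUnitor X := eqToIso (tensor_unit X)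

variable (C) in
/-- Evaluation preserves the tensor operations of `WithStrictUnit C`, so that these inherit the
axioms of a monoidal category from `C`; for the unitors, this is where they are compared with those
of `C`. -/
def inducingFunctorData : Monoidal.InducingFunctorData (evalFunctor C) where
  μIso := evalTensorIso
  εIso := Iso.refl _
  whiskerLeft_eq _ _ _ _ := (fullyFaithfulEvalFunctor C).map_preimage _
  whiskerRight_eq _ _ := (fullyFaithfulEvalFunctor C).map_preimage _
  tensorHom_eq _ _ := (fullyFaithfulEvalFunctor C).map_preimage _
  associator_eq _ _ _ := (fullyFaithfulEvalFunctor C).map_preimage _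
  leftUnitor_eq X :=
    calc 𝟙 (eval X)
      _ = (λ_ (eval X)).inv ≫ (λ_ (eval X)).hom := (Iso.inv_hom_id _).symm
      _ = ((λ_ (eval X)).inv ≫ (𝟙 (𝟙_ C) ⊗ₘ 𝟙 (eval X))) ≫ (λ_ (eval X)).hom := by simp
  rightUnitor_eq X :=
    calc (evalFunctor C).map (eqToHom (tensor_unit X))
      _ = (evalTensorIso X unit).inv ≫ (ρ_ (eval X)).hom := evalFunctor_map_eqToHom_tensor_unit X
      _ = ((evalTensorIso X unit).inv ≫ (𝟙 (eval X) ⊗ₘ 𝟙 (eval unit))) ≫ (ρ_ (eval X)).hom := by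
        simp

instance : MonoidalCategory (WithStrictUnit C) :=
  Monoidal.induced (evalFunctor C) (inducingFunctorData C)

instance : (evalFunctor C).Monoidal :=
  Monoidal.fromInducedMonoidal (evalFunctor C) (inducingFunctorData C)

variable (C) in
/-- Evaluation, as a monoidal equivalence. -/
noncomputable def monoidalEquiv : MonoidalEquiv (WithStrictUnit C) C :=
  haveI : (evalFunctor C).asEquivalence.functor.Monoidal :=
    inferInstanceAs (evalFunctor C).Monoidal
  .ofEquivalence (evalFunctor C).asEquivalence

variable (C) in
lemma isStrictlyUnital : IsStrictlyUnital (WithStrictUnit C) where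
  unit_tensor_obj_eq _ := rfl
  leftUnitor_eq_id _ := rfl
  tensor_unit_obj_eq := tensor_unit
  rightUnitor_eq_id _ := rfl

end WithStrictUnit

theorem every_gr_category_is_equivalent_to_a_strictly_unital_gr_category_general
    (C : Type u) [Category.{v} C] [MonoidalCategory C] :
    ∃ (D : Type u) (_ : Category.{v} D) (_ : MonoidalCategory D),
      IsStrictlyUnital D ∧ Nonempty (MonoidalEquiv C D) :=
  ⟨WithStrictUnit C, inferInstance, inferInstance, WithStrictUnit.isStrictlyUnital C,
    ⟨(WithStrictUnit.monoidalEquiv C).symm⟩⟩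

/-- Every Gr-category is equivalent, as a monoidal category, to a Gr-category with strict
unit laws and identity unitors. -/
theorem every_gr_category_is_equivalent_to_a_strictly_unital_gr_category
    (C : Type u) [Category.{v} C] [MonoidalCategory C] (hC : IsGrCategory C) :
    Nonempty (StrictlyUnitalGrModel C) := by
  obtain ⟨D, _, _, hD, ⟨e⟩⟩ :=
    every_gr_category_is_equivalent_to_a_strictly_unital_gr_category_general C
  exact ⟨{ hD with D, gr := hC.of_monoidalEquiv e, equiv := e }⟩
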